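/- Let Λ ≠ 0 be a real number, let f : ℝ × ℝ² → ℝ and h : ℝ × ℝ² → ℝ² be continuous, and suppose smooth functions M : ℝ × ℝ² → ℝ (mass aspect) and L : ℝ × ℝ² → ℝ² (angular-momentum aspect) satisfy for all (u,x): ∂_u M + (Λ/2)·div L = f and ∂_u L + (1/3)·∇M = h. Assume moreover that L(0,·) = −(1/3)·∇φ for some smooth φ : ℝ² → ℝ, and define M'(u,x) = ∫₀ᵘ M(s,x) ds + φ(x). Then L(u,x) = −(1/3)·∇_x M'(u,x) + ∫₀ᵘ h(s,x) ds for all (u,x), and M' satisfies the second-order equation −(6/Λ)·∂²_u M' + ΔM' = −(6/Λ)·f + 3·div_x ∫₀ᵘ h(s,·) ds. -/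

import Mathlib

/-!
The formula for `L` comes from integrating `∂ᵤL + (1/3)∇M = h` in `u` from `0`, using the initial
condition `L(0,·) = -(1/3)∇φ` and exchanging `∇` with `∫₀ᵘ`, which is legitimate because `M` is
smooth and `[0,u]` is compact (`hasFDerivAt_integral_slice`).

Taking the divergence of that formula gives `div ∫₀ᵘ h = div L + (1/3) ΔM'`. Here `h` is only
continuous, but `∫₀ᵘ h = L + (1/3)∇M'` is differentiable in `x` because `L` and `∇M'` are; the
latter uses differentiation under the integral a second time, for `∂ᵢM`. Finally `∂ᵤM' = M`, so
`div L` is eliminated with `∂ᵤM + (Λ/2) div L = f`.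
-/

/-- Euclidean plane. -/
abbrev Plane : Type := EuclideanSpace ℝ (Fin 2)

/-- Partial derivative of a scalar field on the plane in the i-th coordinate direction. -/
noncomputable def pderiv2 (i : Fin 2) (F : Plane → ℝ) (x : Plane) : ℝ :=
  fderiv ℝ F x (EuclideanSpace.single i 1)

/-- Euclidean gradient of a scalar field on the plane. -/
noncomputable def grad2 (F : Plane → ℝ) (x : Plane) : Plane :=
  (WithLp.equiv 2 (Fin 2 → ℝ)).symm (fun i => pderiv2 i F x)

/-- Euclidean divergence of a vector field on the plane. -/
noncomputable def div2 (V : Plane → Plane) (x : Plane) : ℝ :=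
  ∑ i : Fin 2, pderiv2 i (fun y => V y i) x

/-- Euclidean Laplacian of a scalar field on the plane. -/
noncomputable def lap2 (F : Plane → ℝ) (x : Plane) : ℝ :=
  ∑ i : Fin 2, pderiv2 i (fun y => pderiv2 i F y) x

/-- Differentiation under the integral sign in the space variable. -/
lemma hasFDerivAt_integral_slice {F : ℝ × Plane → ℝ} (hF : ContDiff ℝ (⊤ : ℕ∞) F)
    (u : ℝ) (x : Plane) :
    HasFDerivAt (fun y => ∫ s in (0 : ℝ)..u, F (s, y))
      (∫ s in (0 : ℝ)..u, (fderiv ℝ F (s, x)).comp (ContinuousLinearMap.inr ℝ ℝ Plane)) x := by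
  have hcont : Continuous fun p : ℝ × Plane =>
      (fderiv ℝ F p).comp (ContinuousLinearMap.inr ℝ ℝ Plane) :=
    (hF.continuous_fderiv (by simp)).clm_comp continuous_const
  -- The integrand's derivative is bounded on the compact set `[0,u] × closedBall x 1`.
  obtain ⟨C, hC⟩ := (isCompact_uIcc.prod (isCompact_closedBall x 1)).exists_bound_of_continuousOn
    (s := Set.uIcc (0 : ℝ) u ×ˢ Metric.closedBall x 1) hcont.continuousOn
  refine intervalIntegral.hasFDerivAt_integral_of_dominated_of_fderiv_le
    (F := fun y s => F (s, y))
    (F' := fun y s => (fderiv ℝ F (s, y)).comp (ContinuousLinearMap.inr ℝ ℝ Plane))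
    (bound := fun _ => C) (Metric.closedBall_mem_nhds x one_pos) ?_ ?_ ?_ ?_ ?_ ?_
  · exact Filter.Eventually.of_forall fun y =>
      (hF.continuous.comp (Continuous.prodMk_left y)).aestronglyMeasurable
  · exact (hF.continuous.comp (Continuous.prodMk_left x)).intervalIntegrable _ _
  · exact (hcont.comp (Continuous.prodMk_left x)).aestronglyMeasurable
  · exact Filter.Eventually.of_forall fun s hs y hy =>
      hC (s, y) ⟨Set.uIoc_subset_uIcc hs, hy⟩
  · exact intervalIntegrable_const
  · exact Filter.Eventually.of_forall fun s _ y _ =>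
      ((hF.differentiable (by simp)) (s, y)).hasFDerivAt.comp y (hasFDerivAt_prodMk_right s y)

lemma pderiv2_slice {F : ℝ × Plane → ℝ} (hF : ContDiff ℝ (⊤ : ℕ∞) F) (i : Fin 2)
    (u : ℝ) (x : Plane) :
    pderiv2 i (fun y => F (u, y)) x = fderiv ℝ F (u, x) (0, EuclideanSpace.single i 1) := by
  have h1 := ((hF.differentiable (by simp)) (u, x)).hasFDerivAt.comp x
    (hasFDerivAt_prodMk_right u x)
  have h2 : fderiv ℝ (fun y => F (u, y)) x = _ := h1.fderiv
  simp [pderiv2, h2]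

lemma contDiff_pderiv2_slice {F : ℝ × Plane → ℝ} (hF : ContDiff ℝ (⊤ : ℕ∞) F) (i : Fin 2) :
    ContDiff ℝ (⊤ : ℕ∞) fun p : ℝ × Plane => pderiv2 i (fun y => F (p.1, y)) p.2 := by
  simp only [pderiv2_slice hF]
  exact (hF.fderiv_right (m := (⊤ : ℕ∞)) (by simp)).clm_apply contDiff_const

lemma contDiff_pderiv2 {F : Plane → ℝ} (hF : ContDiff ℝ (⊤ : ℕ∞) F) (i : Fin 2) :
    ContDiff ℝ (⊤ : ℕ∞) (pderiv2 i F) :=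
  (hF.fderiv_right (m := (⊤ : ℕ∞)) (by simp)).clm_apply contDiff_const

lemma pderiv2_integral {F : ℝ × Plane → ℝ} (hF : ContDiff ℝ (⊤ : ℕ∞) F) (i : Fin 2)
    (u : ℝ) (x : Plane) :
    pderiv2 i (fun y => ∫ s in (0 : ℝ)..u, F (s, y)) x
      = ∫ s in (0 : ℝ)..u, pderiv2 i (fun y => F (s, y)) x := by
  have hcont : Continuous fun s : ℝ =>
      (fderiv ℝ F (s, x)).comp (ContinuousLinearMap.inr ℝ ℝ Plane) :=
    ((hF.continuous_fderiv (by simp)).comp (Continuous.prodMk_left x)).clm_comp continuous_const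
  rw [pderiv2, (hasFDerivAt_integral_slice hF u x).fderiv,
    ContinuousLinearMap.intervalIntegral_apply (hcont.intervalIntegrable _ _)]
  simp [pderiv2_slice hF]

/-- the scri constraint system ∂ₒM + (Λ/2)·div L = f,
∂ₒL + (1/3)·∇M = h, with L(0,·) = −(1/3)·∇φ, reduces via the potential
M'(u,x) = ∫₀ᵘ M ds + φ to L = −(1/3)·∇M' + ∫₀ᵘ h ds and a single second-order
equation −(6/Λ)·∂ₒ²M' + ΔM' = −(6/Λ)·f + 3·div ∫₀ᵘ h ds. -/
theorem constraints_reduce_to_potential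
    (Λ : ℝ) (hΛ : Λ ≠ 0)
    (f : ℝ × Plane → ℝ) (hf : Continuous f)
    (h : ℝ × Plane → Plane) (hh : Continuous h)
    (M : ℝ × Plane → ℝ) (hM : ContDiff ℝ (⊤ : ℕ∞) M)
    (L : ℝ × Plane → Plane) (hL : ContDiff ℝ (⊤ : ℕ∞) L)
    (heq1 : ∀ u : ℝ, ∀ x : Plane,
      deriv (fun s => M (s, x)) u + (Λ / 2) * div2 (fun y => L (u, y)) x = f (u, x))
    (heq2 : ∀ u : ℝ, ∀ x : Plane,
      deriv (fun s => L (s, x)) u + (3 : ℝ)⁻¹ • grad2 (fun y => M (u, y)) x = h (u, x))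
    (φ : Plane → ℝ) (hφ : ContDiff ℝ (⊤ : ℕ∞) φ)
    (hL0 : ∀ x : Plane, L (0, x) = -((3 : ℝ)⁻¹ • grad2 φ x))
    (M' : ℝ × Plane → ℝ)
    (hM' : ∀ u : ℝ, ∀ x : Plane, M' (u, x) = (∫ s in (0 : ℝ)..u, M (s, x)) + φ x) :
    (∀ u : ℝ, ∀ x : Plane,
      L (u, x) = -((3 : ℝ)⁻¹ • grad2 (fun y => M' (u, y)) x)
        + ∫ s in (0 : ℝ)..u, h (s, x)) ∧
    (∀ u : ℝ, ∀ x : Plane,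
      -(6 / Λ) * deriv (deriv (fun s => M' (s, x))) u + lap2 (fun y => M' (u, y)) x
        = -(6 / Λ) * f (u, x)
          + 3 * div2 (fun y => ∫ s in (0 : ℝ)..u, h (s, y)) x) := by
  have hLc : ∀ i : Fin 2, ContDiff ℝ (⊤ : ℕ∞) fun p => L p i := fun i =>
    (EuclideanSpace.proj (𝕜 := ℝ) i).contDiff.comp hL
  have hM'x : ∀ u, (fun y => M' (u, y)) = fun y => (∫ s in (0 : ℝ)..u, M (s, y)) + φ y :=
    fun u => funext (hM' u)
  have hgrad : ∀ i u x, pderiv2 i (fun y => M' (u, y)) x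
      = (∫ s in (0 : ℝ)..u, pderiv2 i (fun y => M (s, y)) x) + pderiv2 i φ x := by
    intro i u x
    rw [hM'x, ← pderiv2_integral hM]
    simp only [pderiv2]
    rw [fderiv_fun_add (hasFDerivAt_integral_slice hM u x).differentiableAt
      (hφ.differentiable (by simp) x)]
    rfl
  have hint : ∀ i u x, (∫ s in (0 : ℝ)..u, h (s, x)) i = ∫ s in (0 : ℝ)..u, h (s, x) i :=
    fun i u x => ((EuclideanSpace.proj (𝕜 := ℝ) i).intervalIntegral_comp_comm
      ((hh.comp (Continuous.prodMk_left x)).intervalIntegrable 0 u)).symm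
  have hcomp : ∀ i u x, (∫ s in (0 : ℝ)..u, h (s, x)) i
      = L (u, x) i + 3⁻¹ * pderiv2 i (fun y => M' (u, y)) x := by
    intro i u x
    have hLd : ∀ s, HasDerivAt (fun s => L (s, x) i)
        (h (s, x) i - 3⁻¹ * pderiv2 i (fun y => M (s, y)) x) s := by
      intro s
      have hd : DifferentiableAt ℝ (fun s => L (s, x)) s :=
        (hL.differentiable (by simp) (s, x)).comp s
          (hasFDerivAt_prodMk_left s x).differentiableAt
      have h1 := (EuclideanSpace.proj (𝕜 := ℝ) i).hasFDerivAt.comp_hasDerivAt s hd.hasDerivAt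
      refine h1.congr_deriv ?_
      rw [← heq2 s x]
      simp [grad2]
    have hc1 : Continuous fun s => h (s, x) i :=
      (EuclideanSpace.proj (𝕜 := ℝ) i).continuous.comp (hh.comp (Continuous.prodMk_left x))
    have hc2 : Continuous fun s => 3⁻¹ * pderiv2 i (fun y => M (s, y)) x :=
      continuous_const.mul
        ((contDiff_pderiv2_slice hM i).continuous.comp (Continuous.prodMk_left x))
    have key := intervalIntegral.integral_eq_sub_of_hasDerivAt (a := 0) (b := u)
      (fun s _ => hLd s) ((hc1.sub hc2).intervalIntegrable _ _)
    rw [intervalIntegral.integral_sub (hc1.intervalIntegrable _ _) (hc2.intervalIntegrable _ _),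
      intervalIntegral.integral_const_mul, hL0] at key
    simp only [grad2, PiLp.neg_apply, PiLp.smul_apply, smul_eq_mul, WithLp.equiv_symm_apply] at key
    rw [hint, hgrad]
    linarith
  refine ⟨fun u x => ?_, fun u x => ?_⟩
  · ext i
    rw [PiLp.add_apply, hcomp]
    simp [grad2]
  · have hdiv : div2 (fun y => ∫ s in (0 : ℝ)..u, h (s, y)) x
        = div2 (fun y => L (u, y)) x + 3⁻¹ * lap2 (fun y => M' (u, y)) x := by
      simp only [div2, lap2, Finset.mul_sum, ← Finset.sum_add_distrib, hcomp]
      refine Finset.sum_congr rfl fun i _ => ?_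
      have h1 : DifferentiableAt ℝ (fun y => L (u, y) i) x :=
        DifferentiableAt.comp x ((hLc i).differentiable (by simp) (u, x))
          (hasFDerivAt_prodMk_right u x).differentiableAt
      have h2 : DifferentiableAt ℝ (fun y => pderiv2 i (fun z => M' (u, z)) y) x := by
        simp only [hgrad]
        exact (hasFDerivAt_integral_slice (contDiff_pderiv2_slice hM i) u x).differentiableAt.add
          ((contDiff_pderiv2 hφ i).differentiable (by simp) x)
      rw [pderiv2, fderiv_fun_add h1 (h2.const_mul _), fderiv_const_mul h2]
      rfl
    have hder : deriv (fun s => M' (s, x)) = fun s => M (s, x) := by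
      funext s
      simp only [hM']
      rw [deriv_add_const]
      exact (hM.continuous.comp (Continuous.prodMk_left x)).deriv_integral _ 0 s
    rw [hder, hdiv, ← heq1 u x]
    field_simp
    ring
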